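/- Let l_1,…,l_n and r_1,…,r_n be d-dimensional bit vectors and let ℓ ≥ 1, p ∈ {0,1}, q ≥ 0 be integers, and let G = G_{L,R,ℓ,p,q}. If the vectors l_i and r_j are orthogonal for some 1 ≤ i ≤ n and 1 ≤ j ≤ n, then dist_G(u_i^L, u_j^R) ≥ 6ℓ − 3p + q. -/

import Mathlib

namespace GraphOV

/-- Two bit vectors (functions into `Fin 2`) are orthogonal if in every coordinate
at least one of them is `0`. -/
def Orth {d : ℕ} (a b : Fin d → Fin 2) : Prop := ∀ k, a k = 0 ∨ b k = 0

/-- A system of internally disjoint paths joining exterior vertices from `E`: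
for each path name `i : ι` we record its two endpoints and its length. -/
structure PathSys (E : Type) (ι : Type) where
  src : ι → E
  dst : ι → E
  len : ι → ℕ

namespace PathSys

variable {E ι : Type}

/-- Endpoints of zero-length paths get identified. -/
def idRel (S : PathSys E ι) (a b : E) : Prop :=
  ∃ i, S.len i = 0 ∧ S.src i = a ∧ S.dst i = b

/-- Vertices of the glued graph: exterior vertices (up to identification) together
with, for each path of length `m`, fresh interior vertices at positions `1,…,m-1`. -/
def Vert (S : PathSys E ι) : Type :=
  Quot S.idRel ⊕ Σ i : ι, {t : ℕ // 0 < t ∧ t < S.len i}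

/-- The vertex corresponding to an exterior vertex. -/
def ext (S : PathSys E ι) (a : E) : S.Vert := Sum.inl (Quot.mk _ a)

/-- The `t`-th vertex on the path named `i` (for `0 ≤ t ≤ S.len i`). -/
def pt (S : PathSys E ι) (i : ι) (t : ℕ) : S.Vert :=
  if h : 0 < t ∧ t < S.len i then Sum.inr ⟨i, t, h⟩
  else if t = 0 then S.ext (S.src i) else S.ext (S.dst i)

/-- The glued graph: consecutive vertices on each path are adjacent. -/
def graph (S : PathSys E ι) : SimpleGraph S.Vert :=
  SimpleGraph.fromRel fun a b =>
    ∃ i t, t + 1 ≤ S.len i ∧ a = S.pt i t ∧ b = S.pt i (t + 1)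

/-- The set of vertices lying on the path named `i`. -/
def onPath (S : PathSys E ι) (i : ι) : Set S.Vert :=
  {v | ∃ t ≤ S.len i, v = S.pt i t}

/-- A walk in the glued graph contains the path named `i` entirely if all vertices of
that path occur consecutively (in forward or backward order) on the walk. -/
def WalkContainsPath (S : PathSys E ι) {x y : S.Vert} (W : S.graph.Walk x y) (i : ι) : Prop :=
  ∃ a, a + S.len i ≤ W.length ∧
    ((∀ t ≤ S.len i, W.getVert (a + t) = S.pt i t) ∨
     (∀ t ≤ S.len i, W.getVert (a + t) = S.pt i (S.len i - t)))

end PathSys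

/-- The exterior vertices of the graph `G_{L,R,ℓ,p,q}`. -/
inductive Ext (n d : ℕ) : Type
  | uL : Fin n → Ext n d
  | uR : Fin n → Ext n d
  | vL : Fin n → Ext n d
  | vR : Fin n → Ext n d
  | wL : Fin d → Ext n d
  | wR : Fin d → Ext n d
  | xL : Ext n d
  | xR : Ext n d
  | yL : Ext n d
  | yR : Ext n d

/-- Names for the paths of the graph `G_{L,R,ℓ,p,q}`. -/
inductive Idx (n d : ℕ) (l r : Fin n → Fin d → Fin 2) : Type
  | uvL : Fin n → Idx n d l r
  | uvR : Fin n → Idx n d l r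
  | vxL : Fin n → Idx n d l r
  | vxR : Fin n → Idx n d l r
  | vwL : (i : Fin n) → (k : Fin d) → l i k = 1 → Idx n d l r
  | vwR : (j : Fin n) → (k : Fin d) → r j k = 1 → Idx n d l r
  | ywL : Fin d → Idx n d l r
  | ywR : Fin d → Idx n d l r
  | ww : Fin d → Idx n d l r
  | xyL : Idx n d l r
  | xyR : Idx n d l r
  | yy : Idx n d l r

/-- The path system defining the graph `G_{L,R,ℓ,p,q}`. -/
def sys (n d : ℕ) (l r : Fin n → Fin d → Fin 2) (ℓ p q : ℕ) :
    PathSys (Ext n d) (Idx n d l r) where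
  src := fun i => match i with
    | .uvL i => .uL i
    | .uvR i => .uR i
    | .vxL i => .vL i
    | .vxR i => .vR i
    | .vwL i _ _ => .vL i
    | .vwR j _ _ => .vR j
    | .ywL _ => .yL
    | .ywR _ => .yR
    | .ww k => .wL k
    | .xyL => .xL
    | .xyR => .xR
    | .yy => .yL
  dst := fun i => match i with
    | .uvL i => .vL i
    | .uvR i => .vR i
    | .vxL _ => .xL
    | .vxR _ => .xR
    | .vwL _ k _ => .wL k
    | .vwR _ k _ => .wR k
    | .ywL k => .wL k
    | .ywR k => .wR k
    | .ww k => .wR k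
    | .xyL => .yL
    | .xyR => .yR
    | .yy => .yR
  len := fun i => match i with
    | .uvL _ => ℓ - p
    | .uvR _ => ℓ - p
    | .vxL _ => ℓ
    | .vxR _ => ℓ
    | .vwL _ _ _ => ℓ
    | .vwR _ _ _ => ℓ
    | .ywL _ => ℓ
    | .ywR _ => ℓ
    | .ww _ => q
    | .xyL => ℓ - p
    | .xyR => ℓ - p
    | .yy => p + q

/-- The set `P_i^L`. -/
def PL (n d : ℕ) (l r : Fin n → Fin d → Fin 2) (ℓ p q : ℕ) (i : Fin n) :
    Set (sys n d l r ℓ p q).Vert :=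
  (sys n d l r ℓ p q).onPath (.uvL i) ∪
    ((sys n d l r ℓ p q).onPath (.vxL i) \ {(sys n d l r ℓ p q).ext .xL}) ∪
    ⋃ (k : Fin d) (h : l i k = 1),
      ((sys n d l r ℓ p q).onPath (.vwL i k h) \ {(sys n d l r ℓ p q).ext (.wL k)})

/-- The set `P_j^R`. -/
def PR (n d : ℕ) (l r : Fin n → Fin d → Fin 2) (ℓ p q : ℕ) (j : Fin n) :
    Set (sys n d l r ℓ p q).Vert :=
  (sys n d l r ℓ p q).onPath (.uvR j) ∪
    ((sys n d l r ℓ p q).onPath (.vxR j) \ {(sys n d l r ℓ p q).ext .xR}) ∪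
    ⋃ (k : Fin d) (h : r j k = 1),
      ((sys n d l r ℓ p q).onPath (.vwR j k h) \ {(sys n d l r ℓ p q).ext (.wR k)})

/-- The set `V^L`. -/
def VL (n d : ℕ) (l r : Fin n → Fin d → Fin 2) (ℓ p q : ℕ) :
    Set (sys n d l r ℓ p q).Vert := ⋃ i : Fin n, PL n d l r ℓ p q i

/-- The set `V^R`. -/
def VR (n d : ℕ) (l r : Fin n → Fin d → Fin 2) (ℓ p q : ℕ) :
    Set (sys n d l r ℓ p q).Vert := ⋃ j : Fin n, PR n d l r ℓ p q j

/-- The set `V^M` of all remaining vertices. -/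
def VM (n d : ℕ) (l r : Fin n → Fin d → Fin 2) (ℓ p q : ℕ) :
    Set (sys n d l r ℓ p q).Vert := (VL n d l r ℓ p q ∪ VR n d l r ℓ p q)ᶜ

/-!
A function on the exterior vertices that changes by at most the length of each path between the
ends of that path extends to a 1-Lipschitz function on the whole graph, so its differences bound
distances from below. We apply this to the function that is essentially the distance from
`u_i^L`. Orthogonality enters only along the paths `π(v_j^R, w_k^R)`: these exist only if
`r_j[k] = 1`, and then `l_i[k] = 0`, so that `w_k^R` is already far away from `u_i^L`.
-/

section Lipschitz

variable {V R : Type*} {G : SimpleGraph V} [AddMonoidWithOne R] [Preorder R] [AddRightMono R]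
  {f : V → R} {a b : V}

theorem le_add_walk_length (hf : ∀ ⦃a b⦄, G.Adj a b → f b ≤ f a + 1) (W : G.Walk a b) :
    f b ≤ f a + W.length := by
  induction W with
  | nil => simp
  | @cons a c b hac W ih =>
    calc
      f b ≤ f c + W.length := ih
      _ ≤ f a + 1 + W.length := by gcongr; exact hf hac
      _ = f a + (W.cons hac).length := by
        rw [SimpleGraph.Walk.length_cons, add_comm W.length, Nat.cast_add, Nat.cast_one, add_assoc]

theorem le_add_dist (hf : ∀ ⦃a b⦄, G.Adj a b → f b ≤ f a + 1) (hab : G.Reachable a b) :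
    f b ≤ f a + G.dist a b := by
  obtain ⟨W, hW⟩ := hab.exists_walk_length_eq_dist
  exact hW ▸ le_add_walk_length hf W

end Lipschitz

namespace PathSys

variable {E ι : Type} {S : PathSys E ι}

theorem pt_zero (i : ι) : S.pt i 0 = S.ext (S.src i) := by
  simp [pt]

theorem pt_of_interior {i : ι} {t : ℕ} (ht : 0 < t ∧ t < S.len i) :
    S.pt i t = Sum.inr ⟨i, t, ht⟩ :=
  dif_pos ht

theorem ext_src_eq_ext_dst {i : ι} (hi : S.len i = 0) : S.ext (S.src i) = S.ext (S.dst i) :=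
  congrArg Sum.inl (Quot.sound ⟨i, hi, rfl, rfl⟩)

theorem pt_len (i : ι) : S.pt i (S.len i) = S.ext (S.dst i) := by
  by_cases hi : S.len i = 0
  · rw [hi, pt_zero, ext_src_eq_ext_dst hi]
  · simp [pt, hi]

theorem reachable_pt_succ {i : ι} {t : ℕ} (ht : t + 1 ≤ S.len i) :
    S.graph.Reachable (S.pt i t) (S.pt i (t + 1)) := by
  -- The two points coincide if the path has length one and its ends are identified.
  by_cases heq : S.pt i t = S.pt i (t + 1)
  · rw [heq]
  · exact SimpleGraph.Adj.reachable ⟨heq, Or.inl ⟨i, t, ht, rfl, rfl⟩⟩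

theorem reachable_ext_src_pt {i : ι} {t : ℕ} (ht : t ≤ S.len i) :
    S.graph.Reachable (S.ext (S.src i)) (S.pt i t) := by
  induction t with
  | zero => rw [pt_zero]
  | succ t ih => exact (ih (Nat.le_of_succ_le ht)).trans (reachable_pt_succ ht)

theorem reachable_ext_src_ext_dst (S : PathSys E ι) (i : ι) :
    S.graph.Reachable (S.ext (S.src i)) (S.ext (S.dst i)) :=
  pt_len (S := S) i ▸ reachable_ext_src_pt le_rfl

/-- A potential of a path system: a function on the exterior vertices whose values at the ends of
each path differ by at most the length of the path. It is integer-valued so that differences are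
not truncated. -/
def IsPotential (S : PathSys E ι) (f : E → ℤ) : Prop :=
  ∀ i, |f (S.src i) - f (S.dst i)| ≤ S.len i

namespace IsPotential

variable {f : E → ℤ}

/-- The largest extension of a potential to a 1-Lipschitz function on the glued graph: at an
interior vertex it is the smaller of the two bounds coming from the ends of the path. -/
def extend (hf : S.IsPotential f) : S.Vert → ℤ
  | Sum.inl a => Quot.lift f (by
      rintro _ _ ⟨i, hi, rfl, rfl⟩
      simpa [hi, sub_eq_zero] using hf i) a
  | Sum.inr ⟨i, t⟩ => min (f (S.src i) + t.1) (f (S.dst i) + (S.len i - t.1))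

theorem extend_ext (hf : S.IsPotential f) (a : E) : hf.extend (S.ext a) = f a :=
  rfl

theorem extend_pt (hf : S.IsPotential f) {i : ι} {t : ℕ} (ht : t ≤ S.len i) :
    hf.extend (S.pt i t) = min (f (S.src i) + t) (f (S.dst i) + (S.len i - t)) := by
  have hi := abs_le.1 (hf i)
  rcases Nat.eq_zero_or_pos t with rfl | hpos
  · rw [pt_zero, extend_ext]
    omega
  rcases ht.eq_or_lt with rfl | hlt
  · rw [pt_len, extend_ext]
    omega
  · rw [pt_of_interior ⟨hpos, hlt⟩]
    rfl

theorem extend_le_add_one_of_adj (hf : S.IsPotential f) ⦃a b : S.Vert⦄ (hab : S.graph.Adj a b) :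
    hf.extend b ≤ hf.extend a + 1 := by
  obtain ⟨-, ⟨i, t, ht, rfl, rfl⟩ | ⟨i, t, ht, rfl, rfl⟩⟩ := hab <;>
  · rw [extend_pt hf ht, extend_pt hf (Nat.le_of_succ_le ht)]
    omega

theorem le_add_dist (hf : S.IsPotential f) {a b : E}
    (hab : S.graph.Reachable (S.ext a) (S.ext b)) :
    f b ≤ f a + S.graph.dist (S.ext a) (S.ext b) :=
  GraphOV.le_add_dist hf.extend_le_add_one_of_adj hab

end IsPotential

end PathSys

theorem Orth.ne_one_of_eq_one {d : ℕ} {a b : Fin d → Fin 2} (hab : Orth a b) {k : Fin d}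
    (hk : b k = 1) : a k ≠ 1 := by
  rcases hab k with h | h <;> simp_all

section OrthogonalVectors

variable {n d : ℕ} {l r : Fin n → Fin d → Fin 2}

theorem reachable_uL_uR (ℓ p q : ℕ) (i j : Fin n) :
    (sys n d l r ℓ p q).graph.Reachable
      ((sys n d l r ℓ p q).ext (.uL i)) ((sys n d l r ℓ p q).ext (.uR j)) :=
  let path := (sys n d l r ℓ p q).reachable_ext_src_ext_dst
  (path (.uvL i)).trans <| (path (.vxL i)).trans <| (path .xyL).trans <| (path .yy).trans <|
    (path .xyR).symm.trans <| (path (.vxR j)).symm.trans (path (.uvR j)).symm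

/-- The potential proving that `u_i^L` and `u_j^R` are far apart when `l_i` and `r_j` are
orthogonal. In that case its values are the distances from `u_i^L`, except at `v_{j'}^R` and
`u_{j'}^R` with `j' ≠ j`, where they are only lower bounds: there the distance depends on whether
`l_i` and `r_{j'}` are orthogonal. -/
def orthPotential (l : Fin n → Fin d → Fin 2) (ℓ p q : ℤ) (i j : Fin n) : Ext n d → ℤ
  | .uL i' => if i' = i then 0 else 4 * ℓ - 2 * p
  | .vL i' => if i' = i then ℓ - p else 3 * ℓ - p
  | .xL => 2 * ℓ - p
  | .yL => 3 * ℓ - 2 * p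
  | .wL k => if l i k = 1 then 2 * ℓ - p else 4 * ℓ - 2 * p
  | .wR k => if l i k = 1 then 2 * ℓ - p + q else 4 * ℓ - 2 * p + q
  | .yR => 3 * ℓ - p + q
  | .xR => 4 * ℓ - 2 * p + q
  | .vR j' => if j' = j then 5 * ℓ - 2 * p + q else 3 * ℓ - p + q
  | .uR j' => if j' = j then 6 * ℓ - 3 * p + q else 4 * ℓ - 2 * p + q

theorem isPotential_orthPotential {ℓ p : ℕ} (hp : p ≤ ℓ) (q : ℕ) {i j : Fin n}
    (horth : Orth (l i) (r j)) :
    (sys n d l r ℓ p q).IsPotential (orthPotential l ℓ p q i j) := by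
  intro e
  rw [abs_le]
  cases e with
  | vwL i' k hk =>
    simp only [sys, orthPotential]
    rcases eq_or_ne i' i with rfl | hi
    · rw [if_pos rfl, if_pos hk]
      omega
    · rw [if_neg hi]
      split_ifs <;> omega
  | vwR j' k hk =>
    simp only [sys, orthPotential]
    rcases eq_or_ne j' j with rfl | hj
    · rw [if_pos rfl, if_neg (horth.ne_one_of_eq_one hk)]
      omega
    · rw [if_neg hj]
      split_ifs <;> omega
  | _ =>
    simp only [sys, orthPotential]
    grind

theorem dist_u_to_u_orth_general {ℓ p : ℕ} (hp : p ≤ ℓ) (q : ℕ) {i j : Fin n}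
    (horth : Orth (l i) (r j)) :
    6 * ℓ - 3 * p + q ≤ (sys n d l r ℓ p q).graph.dist
      ((sys n d l r ℓ p q).ext (.uL i)) ((sys n d l r ℓ p q).ext (.uR j)) := by
  have hdist := (isPotential_orthPotential hp q horth).le_add_dist (reachable_uL_uR ℓ p q i j)
  simp only [orthPotential, if_true] at hdist
  omega

end OrthogonalVectors

theorem dist_u_to_u_orth (n d ℓ p q : ℕ) (hn : 1 ≤ n) (hd : 1 ≤ d) (hℓ : 1 ≤ ℓ)
    (hp : p ≤ 1) (l r : Fin n → Fin d → Fin 2) (i j : Fin n) (horth : Orth (l i) (r j)) :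
    6 * ℓ - 3 * p + q ≤ (sys n d l r ℓ p q).graph.dist
      ((sys n d l r ℓ p q).ext (.uL i)) ((sys n d l r ℓ p q).ext (.uR j)) := by
  exact dist_u_to_u_orth_general (hp.trans hℓ) q horth

end GraphOV
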